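/- Let σ > 0 and N ≥ 1. Among nondecreasing functions with values in [m, M], equation (C⁻) admits a minimal solution l*, i.e. a nondecreasing solution satisfying l*(x) ≤ L(x) for every x ∈ ℝ whenever L is a nondecreasing solution of (C⁻) with values in [m, M]. This minimal solution is not constant, and every solution F of equation (E) with values in [m, M] satisfies F(x) ≥ l*(x) for all x ∈ ℝ. -/

import Mathlib

open MeasureTheory Filter Set

/-- Centered Gaussian density with variance `σ²`. -/
noncomputable def gq (σ z : ℝ) : ℝ :=
  Real.exp (-(z ^ 2) / (2 * σ ^ 2)) / (σ * Real.sqrt (2 * Real.pi))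

/-- The averaged kernel `q̄(σ,x,z)`. -/
noncomputable def gqbar (σ x z : ℝ) : ℝ :=
  if x = 0 then gq σ z else (1 / x) * ∫ y in (0:ℝ)..x, gq σ (y - z)

/-- `Φ⁺(y) = E[V·1_{V>y}]`. -/
noncomputable def Phip {Ω : Type*} [MeasurableSpace Ω] (P : Measure Ω) (V : Ω → ℝ) (y : ℝ) : ℝ :=
  ∫ ω in {ω | V ω > y}, V ω ∂P

/-- `Π⁺(y) = P(V > y)`. -/
noncomputable def Pip {Ω : Type*} [MeasurableSpace Ω] (P : Measure Ω) (V : Ω → ℝ) (y : ℝ) : ℝ :=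
  (P {ω | V ω > y}).toReal

/-- `Φ⁻(y) = E[V·1_{V≤y}]`. -/
noncomputable def Phim {Ω : Type*} [MeasurableSpace Ω] (P : Measure Ω) (V : Ω → ℝ) (y : ℝ) : ℝ :=
  ∫ ω in {ω | V ω ≤ y}, V ω ∂P

/-- `Π⁻(y) = P(V ≤ y)`. -/
noncomputable def Pim {Ω : Type*} [MeasurableSpace Ω] (P : Measure Ω) (V : Ω → ℝ) (y : ℝ) : ℝ :=
  (P {ω | V ω ≤ y}).toReal

/-- `Ψ⁺ = Φ⁺/Π⁺`. -/
noncomputable def Psip {Ω : Type*} [MeasurableSpace Ω] (P : Measure Ω) (V : Ω → ℝ) (y : ℝ) : ℝ :=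
  Phip P V y / Pip P V y

/-- `Ψ⁻ = Φ⁻/Π⁻`. -/
noncomputable def Psim {Ω : Type*} [MeasurableSpace Ω] (P : Measure Ω) (V : Ω → ℝ) (y : ℝ) : ℝ :=
  Phim P V y / Pim P V y

/-- `φ⁺_g`. -/
noncomputable def phip {Ω : Type*} [MeasurableSpace Ω] (P : Measure Ω) (V : Ω → ℝ)
    (σ : ℝ) (g : ℝ → ℝ) (x : ℝ) : ℝ :=
  (∫ z, Phip P V (g z) * gq σ (x - z)) / (∫ z, Pip P V (g z) * gq σ (x - z))

/-- `φ⁻_g`. -/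
noncomputable def phim {Ω : Type*} [MeasurableSpace Ω] (P : Measure Ω) (V : Ω → ℝ)
    (σ : ℝ) (g : ℝ → ℝ) (x : ℝ) : ℝ :=
  (∫ z, Phim P V (g z) * gq σ (x - z)) / (∫ z, Pim P V (g z) * gq σ (x - z))

/-- `φ_g`, equal to `φ⁺_g` on `[0,∞)` and `φ⁻_g` on `(−∞,0)`. -/
noncomputable def phig {Ω : Type*} [MeasurableSpace Ω] (P : Measure Ω) (V : Ω → ℝ)
    (σ : ℝ) (g : ℝ → ℝ) (x : ℝ) : ℝ :=
  if 0 ≤ x then phip P V σ g x else phim P V σ g x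

/-- The interior of the support of the law of `V` is `(m, M)` (with `V` bounded). -/
def SuppIoo {Ω : Type*} [MeasurableSpace Ω] (P : Measure Ω) (V : Ω → ℝ) (m M : ℝ) : Prop :=
  m < M ∧ (∀ᵐ ω ∂P, V ω ∈ Set.Icc m M) ∧
    (∀ y < M, 0 < P {ω | V ω > y}) ∧ (∀ y, m < y → 0 < P {ω | V ω ≤ y})

/-- Equation (E). -/
def SolvesE {Ω : Type*} [MeasurableSpace Ω] (P : Measure Ω) (V : Ω → ℝ)
    (σ : ℝ) (N : ℕ) (F : ℝ → ℝ) : Prop :=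
  ∀ x : ℝ, F x =
    ∫ z, ((1 / (N:ℝ)) * gq σ (x - z) + (((N:ℝ) - 1) / (N:ℝ)) * gqbar σ x z) * phig P V σ F z

/-- Equation (C⁻). -/
def SolvesCm {Ω : Type*} [MeasurableSpace Ω] (P : Measure Ω) (V : Ω → ℝ)
    (σ : ℝ) (N : ℕ) (l : ℝ → ℝ) : Prop :=
  ∀ x : ℝ, l x =
    (∫ ω, V ω ∂P) *
      (∫ z in Set.Ioi (0:ℝ),
        ((1 / (N:ℝ)) * gq σ (x - z) + (((N:ℝ) - 1) / (N:ℝ)) * gqbar σ x z)) +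
    ∫ z in Set.Iio (0:ℝ),
      ((1 / (N:ℝ)) * gq σ (x - z) + (((N:ℝ) - 1) / (N:ℝ)) * gqbar σ x z) *
        ∫ y, Psim P V (l y) * gq σ (z - y)

open ProbabilityTheory
open scoped Topology NNReal

/-!
Write (C⁻) as `l = T (Ψ⁻ ∘ l)`, where `T f` averages, against the kernel of the equation, the
function equal to `E[V]` on `[0, ∞)` and to the Gaussian smoothing of `f` on `(-∞, 0)`. That kernel
is the law of `t * x + Z` with `Z` Gaussian and `t > 0` random and independent of `Z`, so it
preserves monotonicity and limits at `±∞`. As `Ψ⁻` is nondecreasing, `l ↦ T (Ψ⁻ ∘ l)` is monotone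
and has a least nondecreasing fixed point, which lies below every supersolution.

A solution `F` of (E) is a supersolution: `E[V] Π⁺ ≤ Φ⁺` gives `E[V] ≤ φ⁺_F`, and since `Ψ⁻ ∘ F` and
`Π⁻ ∘ F` are similarly ordered, Chebyshev's association inequality bounds the numerator
`∫ Φ⁻ (F z) q(σ, x - z) dz` of `φ⁻_F` below by the product of the smoothings of `Ψ⁻ ∘ F` and
`Π⁻ ∘ F`.

A solution of (C⁻) tends to `E[V]` at `+∞`, and a constant one would be a fixed point of `Ψ⁻`;
but `Ψ⁻ (E[V]) < E[V]`. Limits at `±∞` likewise exclude that a denominator of `φ_F` vanishes.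
-/

/-! ### Fixed points below supersolutions -/

/- The supersolution `F` need not be monotone: its largest monotone minorant
`x ↦ ⨅ y ≥ x, F y` is again a supersolution. -/
theorem exists_monotone_fixedPoint_le_supersolution {α β : Type*} [Preorder α]
    [CompleteLattice β] {T : (α → β) → α → β} {S : Set (α → β)}
    (hS : ∀ f, Monotone f → f ∈ S) (hT : MonotoneOn T S)
    (hTmono : ∀ f, Monotone f → Monotone (T f)) :
    ∃ l, Monotone l ∧ T l = l ∧ ∀ F ∈ S, T F ≤ F → l ≤ F := by
  let Φ : (α →o β) →o (α →o β) :=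
    ⟨fun f => ⟨T f, hTmono f f.monotone⟩, fun f g hfg => hT (hS f f.monotone) (hS g g.monotone) hfg⟩
  refine ⟨Φ.lfp, Φ.lfp.monotone, congrArg DFunLike.coe Φ.map_lfp, fun F hF hTF => ?_⟩
  let G : α →o β := ⟨fun x => ⨅ y ≥ x, F y, fun x y hxy => biInf_mono fun _ => hxy.trans⟩
  have hGF : ⇑G ≤ F := fun x => iInf₂_le x le_rfl
  have hTG : Φ G ≤ G := fun x => le_iInf₂ fun y hxy =>
    calc T G x ≤ T G y := hTmono G G.monotone hxy
      _ ≤ T F y := hT (hS G G.monotone) hF hGF y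
      _ ≤ F y := hTF y
  exact le_trans (Φ.lfp_le hTG : ⇑Φ.lfp ≤ G) hGF

/-! ### Integrals against probability measures and kernels -/

section Integral

variable {α β : Type*} [MeasurableSpace α] [MeasurableSpace β]

theorem integrable_of_mem_Icc {μ : Measure α} [IsFiniteMeasure μ] {f : α → ℝ} {a b : ℝ}
    (hf : Measurable f) (hab : ∀ x, f x ∈ Icc a b) : Integrable f μ :=
  .of_mem_Icc a b hf.aemeasurable (.of_forall hab)

theorem integral_mem_Icc {μ : Measure α} [IsProbabilityMeasure μ] {f : α → ℝ} {a b : ℝ}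
    (hf : Measurable f) (hab : ∀ x, f x ∈ Icc a b) : ∫ x, f x ∂μ ∈ Icc a b :=
  (convex_Icc a b).integral_mem isClosed_Icc (.of_forall hab) (integrable_of_mem_Icc hf hab)

theorem integral_lt_integral_of_ae_le {μ : Measure α} {f g : α → ℝ} (hf : Integrable f μ)
    (hg : Integrable g μ) (hfg : f ≤ᵐ[μ] g) (hlt : μ {x | f x < g x} ≠ 0) :
    ∫ x, f x ∂μ < ∫ x, g x ∂μ :=
  (integral_mono_ae hf hg hfg).lt_of_ne fun heq => hlt <| measure_mono_null
    (fun _ hx => ne_of_lt hx) (ae_iff.1 ((integral_eq_iff_of_ae_le hf hg hfg).1 heq))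

theorem abs_integral_div_integral_le {μ : Measure α} {f g : α → ℝ} {C : ℝ} (hC : 0 ≤ C)
    (hg : Integrable g μ) (hfg : ∀ x, |f x| ≤ C * g x) :
    |(∫ x, f x ∂μ) / ∫ x, g x ∂μ| ≤ C := by
  have h : |∫ x, f x ∂μ| ≤ C * ∫ x, g x ∂μ := by
    rw [← integral_const_mul]
    exact norm_integral_le_of_norm_le (f := f) (hg.const_mul C) (.of_forall hfg)
  rw [abs_div]
  exact div_le_of_le_mul₀ (abs_nonneg _) hC (h.trans (by gcongr; exact le_abs_self _))

/- Integrate `0 ≤ (f x - f y) * (g x - g y)` over two independent copies of `μ`. -/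
theorem integral_mul_integral_le_of_monovary {μ : Measure α} [IsProbabilityMeasure μ]
    {f g : α → ℝ} (hfg : Monovary f g) (hf : Integrable f μ) (hg : Integrable g μ)
    (hmul : Integrable (fun x => f x * g x) μ) :
    (∫ x, f x ∂μ) * ∫ x, g x ∂μ ≤ ∫ x, f x * g x ∂μ := by
  have hpos : 0 ≤ ∫ p : α × α, (f p.1 - f p.2) * (g p.1 - g p.2) ∂μ.prod μ :=
    integral_nonneg fun p => hfg.sub_mul_sub_nonneg p.2 p.1
  have hdiag : Integrable (fun p : α × α => f p.1 * g p.1 + f p.2 * g p.2) (μ.prod μ) :=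
    (hmul.comp_fst μ).add (hmul.comp_snd μ)
  have hcross : Integrable (fun p : α × α => f p.1 * g p.2 + g p.1 * f p.2) (μ.prod μ) :=
    (hf.mul_prod hg).add (hg.mul_prod hf)
  have hexpand : ∫ p : α × α, (f p.1 - f p.2) * (g p.1 - g p.2) ∂μ.prod μ =
      2 * (∫ x, f x * g x ∂μ) - 2 * ((∫ x, f x ∂μ) * ∫ x, g x ∂μ) :=
    calc
      _ = ∫ p : α × α, (f p.1 * g p.1 + f p.2 * g p.2) - (f p.1 * g p.2 + g p.1 * f p.2)
          ∂μ.prod μ := by congr with p; ring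
      _ = _ := by
        rw [integral_sub hdiag hcross, integral_add (hmul.comp_fst μ) (hmul.comp_snd μ),
          integral_add (hf.mul_prod hg) (hg.mul_prod hf), integral_prod_mul, integral_prod_mul,
          integral_fun_fst (fun x => f x * g x), integral_fun_snd (fun x => f x * g x)]
        simp only [probReal_univ, one_smul]
        ring
  linarith

theorem frequently_atTop_of_ae {p : ℝ → Prop} (h : ∀ᵐ x, p x) : ∃ᶠ x in atTop, p x :=
  frequently_atTop.2 fun a =>
    let ⟨b, hb, hab⟩ := (Measure.dense_of_ae h).exists_ge a
    ⟨b, hab, hb⟩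

theorem frequently_atBot_of_ae {p : ℝ → Prop} (h : ∀ᵐ x, p x) : ∃ᶠ x in atBot, p x :=
  frequently_atBot.2 fun a =>
    let ⟨b, hb, hab⟩ := (Measure.dense_of_ae h).exists_le a
    ⟨b, hab, hb⟩

theorem measurable_integral_kernel_of_absolutelyContinuous {κ : Kernel α β} [IsSFiniteKernel κ]
    {ν : Measure β} (hκν : ∀ x, κ x ≪ ν) (hνκ : ∀ x, ν ≪ κ x) (f : β → ℝ) :
    Measurable fun x => ∫ y, f y ∂κ x := by
  by_cases hf : AEStronglyMeasurable f ν
  · simp_rw [fun x => integral_congr_ae ((hκν x).ae_eq hf.ae_eq_mk)]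
    exact hf.stronglyMeasurable_mk.integral_kernel.measurable
  · simp_rw [fun x => integral_non_aestronglyMeasurable fun hx => hf (hx.mono_ac (hνκ x))]
    exact measurable_const

end Integral

/-! ### Random affine maps -/

section AffineKernel

/-- The transition kernel `x ↦ law of T * x + Z`, where the pair `(T, Z)` has law `μ`. -/
noncomputable def affineKernel (μ : Measure (ℝ × ℝ)) [SFinite μ] : Kernel ℝ ℝ :=
  (Kernel.id ×ₖ Kernel.const ℝ μ).map fun q => q.2.1 * q.1 + q.2.2

variable {μ : Measure (ℝ × ℝ)} [IsProbabilityMeasure μ]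

instance : IsMarkovKernel (affineKernel μ) :=
  Kernel.IsMarkovKernel.map _ (by fun_prop)

theorem affineKernel_apply (μ : Measure (ℝ × ℝ)) [SFinite μ] (x : ℝ) :
    affineKernel μ x = μ.map fun p => p.1 * x + p.2 := by
  rw [affineKernel, Kernel.map_apply _ (by fun_prop), Kernel.prod_apply, Kernel.id_apply,
    Kernel.const_apply, Measure.dirac_prod, Measure.map_map (by fun_prop) (by fun_prop)]
  rfl

theorem integral_affineKernel (μ : Measure (ℝ × ℝ)) [SFinite μ] {f : ℝ → ℝ} (hf : Measurable f)
    (x : ℝ) : ∫ z, f z ∂affineKernel μ x = ∫ p, f (p.1 * x + p.2) ∂μ := by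
  rw [affineKernel_apply, integral_map (by fun_prop) hf.aestronglyMeasurable]

/-- A kernel is stochastically monotone if it maps bounded nondecreasing functions to
nondecreasing functions. -/
def StochasticallyMonotone (κ : Kernel ℝ ℝ) : Prop :=
  ∀ ⦃f : ℝ → ℝ⦄ ⦃a b : ℝ⦄, Monotone f → (∀ x, f x ∈ Icc a b) → Monotone fun x => ∫ z, f z ∂κ x

theorem stochasticallyMonotone_affineKernel (hμ : ∀ᵐ p ∂μ, 0 ≤ p.1) :
    StochasticallyMonotone (affineKernel μ) := by
  intro f a b hf hab x y hxy
  simp only [integral_affineKernel μ hf.measurable]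
  have hint (x : ℝ) : Integrable (fun p : ℝ × ℝ => f (p.1 * x + p.2)) μ :=
    integrable_of_mem_Icc (hf.measurable.comp (by fun_prop)) fun _ => hab _
  refine integral_mono_ae (hint x) (hint y) ?_
  filter_upwards [hμ] with p hp
  exact hf (by gcongr)

theorem tendsto_integral_affineKernel {l : Filter ℝ} [l.IsCountablyGenerated]
    (hl : ∀ᵐ p ∂μ, Tendsto (fun x => p.1 * x + p.2) l l) {f : ℝ → ℝ} {a b c : ℝ}
    (hf : Measurable f) (hab : ∀ x, f x ∈ Icc a b) (hc : Tendsto f l (𝓝 c)) :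
    Tendsto (fun x => ∫ z, f z ∂affineKernel μ x) l (𝓝 c) := by
  simp only [integral_affineKernel μ hf]
  have hconst : ∫ _, c ∂μ = c := by simp
  rw [← hconst]
  refine tendsto_integral_filter_of_dominated_convergence (fun _ => max |a| |b|)
    (.of_forall fun x => (hf.comp (by fun_prop)).aestronglyMeasurable)
    (.of_forall fun x => .of_forall fun p => abs_le_max_abs_abs (hab _).1 (hab _).2)
    (integrable_const _) ?_
  filter_upwards [hl] with p hp using hc.comp hp

theorem affineKernel_prod_gaussianReal (ρ : Measure ℝ) [SFinite ρ] {v : ℝ≥0} (hv : v ≠ 0)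
    (x : ℝ) : affineKernel (ρ.prod (gaussianReal 0 v)) x =
      volume.withDensity fun z => ∫⁻ t, gaussianPDF (t * x) v z ∂ρ := by
  ext s hs
  rw [affineKernel_apply, Measure.map_apply (by fun_prop) hs, withDensity_apply _ hs,
    Measure.prod_apply (measurableSet_preimage (by fun_prop) hs)]
  have hslice (t : ℝ) : gaussianReal 0 v (Prod.mk t ⁻¹' ((fun p => p.1 * x + p.2) ⁻¹' s)) =
      ∫⁻ z in s, gaussianPDF (t * x) v z := by
    rw [← gaussianReal_apply _ hv, ← zero_add (t * x), ← gaussianReal_map_const_add,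
      Measure.map_apply (by fun_prop) hs]
    rfl
  simp only [hslice]
  refine lintegral_lintegral_swap (Measurable.aemeasurable ?_)
  unfold gaussianPDF gaussianPDFReal
  fun_prop

end AffineKernel

/-! ### The kernel of the equations -/

section MixKernel

/-- The kernel `(1/N) q(σ, x - z) + ((N - 1)/N) q̄(σ, x, z)` of the equations (E) and (C⁻). -/
noncomputable def mixDensity (σ : ℝ) (N : ℕ) (x z : ℝ) : ℝ :=
  (1 / (N : ℝ)) * gq σ (x - z) + (((N : ℝ) - 1) / (N : ℝ)) * gqbar σ x z

/-- The law equal to `1` with probability `1/N` and uniform on `(0, 1]` otherwise: multiplying `x`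
by such a variable produces the average over `[0, x]` in `q̄`. -/
noncomputable def scaleLaw (N : ℕ) : Measure ℝ :=
  ENNReal.ofReal (1 / (N : ℝ)) • Measure.dirac 1 +
    ENNReal.ofReal (((N : ℝ) - 1) / (N : ℝ)) • volume.restrict (Ioc 0 1)

theorem ae_scaleLaw_pos (N : ℕ) : ∀ᵐ t ∂scaleLaw N, 0 < t := by
  rw [scaleLaw, ae_add_measure_iff]
  refine ⟨Measure.ae_smul_measure ?_ _, Measure.ae_smul_measure ?_ _⟩
  · simp [ae_dirac_eq]
  · exact (ae_restrict_mem measurableSet_Ioc).mono fun t ht => ht.1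

theorem ae_scaleLaw_prod_pos (N : ℕ) (μ : Measure ℝ) [SFinite μ] :
    ∀ᵐ p ∂(scaleLaw N).prod μ, 0 < p.1 :=
  Measure.quasiMeasurePreserving_fst.ae (ae_scaleLaw_pos N)

variable {σ : ℝ} {N : ℕ} [NeZero N]

theorem natCast_sub_one_div_nonneg (N : ℕ) [NeZero N] : 0 ≤ ((N : ℝ) - 1) / (N : ℝ) :=
  div_nonneg (sub_nonneg.2 (by exact_mod_cast NeZero.one_le)) N.cast_nonneg

instance : IsProbabilityMeasure (scaleLaw N) where
  measure_univ := by
    have hN : (N : ℝ) ≠ 0 := NeZero.ne _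
    simp only [scaleLaw, Measure.add_apply, Measure.smul_apply, smul_eq_mul, measure_univ, mul_one,
      Measure.restrict_apply_univ, Real.volume_Ioc, sub_zero, ENNReal.ofReal_one]
    rw [← ENNReal.ofReal_add (by positivity) (natCast_sub_one_div_nonneg N), ← add_div,
      add_sub_cancel, div_self hN, ENNReal.ofReal_one]

/-- The transition kernel with density `mixDensity σ N` if `σ > 0`. For `N = 1` it is the
convolution with the Gaussian density `gq σ`. -/
noncomputable def mixKernel (σ : ℝ) (N : ℕ) [NeZero N] : Kernel ℝ ℝ :=
  affineKernel ((scaleLaw N).prod (gaussianReal 0 (σ ^ 2).toNNReal))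

instance : IsMarkovKernel (mixKernel σ N) :=
  inferInstanceAs (IsMarkovKernel (affineKernel _))

theorem stochasticallyMonotone_mixKernel : StochasticallyMonotone (mixKernel σ N) :=
  stochasticallyMonotone_affineKernel <| (ae_scaleLaw_prod_pos N _).mono fun _ => le_of_lt

theorem tendsto_integral_mixKernel_atTop {f : ℝ → ℝ} {a b c : ℝ} (hf : Measurable f)
    (hab : ∀ x, f x ∈ Icc a b) (hc : Tendsto f atTop (𝓝 c)) :
    Tendsto (fun x => ∫ z, f z ∂mixKernel σ N x) atTop (𝓝 c) :=
  tendsto_integral_affineKernel ((ae_scaleLaw_prod_pos N _).mono fun _ hp =>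
    tendsto_atTop_add_const_right _ _ (tendsto_id.const_mul_atTop hp)) hf hab hc

theorem tendsto_integral_mixKernel_atBot {f : ℝ → ℝ} {a b c : ℝ} (hf : Measurable f)
    (hab : ∀ x, f x ∈ Icc a b) (hc : Tendsto f atBot (𝓝 c)) :
    Tendsto (fun x => ∫ z, f z ∂mixKernel σ N x) atBot (𝓝 c) :=
  tendsto_integral_affineKernel ((ae_scaleLaw_prod_pos N _).mono fun _ hp =>
    tendsto_atBot_add_const_right _ _ (tendsto_id.const_mul_atBot hp)) hf hab hc

theorem gq_sub_eq_gaussianPDFReal (hσ : 0 < σ) (x z : ℝ) :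
    gq σ (x - z) = gaussianPDFReal x (σ ^ 2).toNNReal z := by
  rw [gq, gaussianPDFReal, Real.coe_toNNReal _ (sq_nonneg σ), Real.sqrt_mul' _ (sq_nonneg σ),
    Real.sqrt_sq hσ.le, div_eq_inv_mul, mul_comm σ, ← neg_sub z x, neg_sq]

theorem gqbar_eq_integral (σ x z : ℝ) : gqbar σ x z = ∫ t in Ioc (0 : ℝ) 1, gq σ (t * x - z) := by
  rw [← intervalIntegral.integral_of_le zero_le_one, gqbar]
  split_ifs with hx
  · simp [hx, gq]
  · rw [intervalIntegral.integral_comp_mul_right (fun y => gq σ (y - z)) hx]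
    simp

theorem gq_pos (hσ : 0 < σ) (z : ℝ) : 0 < gq σ z := by
  unfold gq
  positivity

theorem mixDensity_pos (hσ : 0 < σ) (x z : ℝ) : 0 < mixDensity σ N x z := by
  have hbar : 0 ≤ gqbar σ x z := by
    rw [gqbar_eq_integral]
    exact integral_nonneg fun t => (gq_pos hσ _).le
  have hN : 0 < (N : ℝ) := Nat.cast_pos.2 NeZero.one_le
  exact add_pos_of_pos_of_nonneg (mul_pos (one_div_pos.2 hN) (gq_pos hσ _))
    (mul_nonneg (natCast_sub_one_div_nonneg N) hbar)

theorem lintegral_gaussianPDF_scaleLaw (hσ : 0 < σ) (x z : ℝ) :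
    ∫⁻ t, gaussianPDF (t * x) (σ ^ 2).toNNReal z ∂scaleLaw N =
      ENNReal.ofReal (mixDensity σ N x z) := by
  have hint : IntegrableOn (fun t => gq σ (t * x - z)) (Ioc 0 1) :=
    (Continuous.integrableOn_Icc (by unfold gq; fun_prop)).mono_set Ioc_subset_Icc_self
  have hbar : 0 ≤ ∫ t in Ioc (0 : ℝ) 1, gq σ (t * x - z) :=
    integral_nonneg fun t => (gq_pos hσ _).le
  simp only [gaussianPDF, ← gq_sub_eq_gaussianPDFReal hσ, scaleLaw, mixDensity, gqbar_eq_integral]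
  rw [lintegral_add_measure, lintegral_smul_measure, lintegral_smul_measure, lintegral_dirac,
    ← ofReal_integral_eq_lintegral_ofReal hint (.of_forall fun t => (gq_pos hσ _).le),
    smul_eq_mul, smul_eq_mul, ← ENNReal.ofReal_mul (by positivity),
    ← ENNReal.ofReal_mul (natCast_sub_one_div_nonneg N), one_mul,
    ← ENNReal.ofReal_add (mul_nonneg (by positivity) (gq_pos hσ _).le)
      (mul_nonneg (natCast_sub_one_div_nonneg N) hbar)]

theorem mixKernel_apply (hσ : 0 < σ) (x : ℝ) :
    mixKernel σ N x = volume.withDensity fun z => ENNReal.ofReal (mixDensity σ N x z) := by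
  rw [mixKernel, affineKernel_prod_gaussianReal _ (Real.toNNReal_pos.2 (sq_pos_of_pos hσ)).ne']
  simp only [lintegral_gaussianPDF_scaleLaw hσ]

theorem measurable_ofReal_mixDensity (hσ : 0 < σ) (x : ℝ) :
    Measurable fun z => ENNReal.ofReal (mixDensity σ N x z) := by
  simp only [← lintegral_gaussianPDF_scaleLaw hσ]
  refine Measurable.lintegral_prod_right ?_
  unfold gaussianPDF gaussianPDFReal
  fun_prop

theorem mixKernel_absolutelyContinuous (hσ : 0 < σ) (x : ℝ) : mixKernel σ N x ≪ volume := by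
  rw [mixKernel_apply hσ]
  exact withDensity_absolutelyContinuous _ _

theorem volume_absolutelyContinuous_mixKernel (hσ : 0 < σ) (x : ℝ) :
    volume ≪ mixKernel σ N x := by
  rw [mixKernel_apply hσ]
  exact withDensity_absolutelyContinuous' (measurable_ofReal_mixDensity hσ x).aemeasurable
    (.of_forall fun z => (ENNReal.ofReal_pos.2 (mixDensity_pos hσ x z)).ne')

theorem measurable_integral_mixKernel (hσ : 0 < σ) (f : ℝ → ℝ) :
    Measurable fun x => ∫ z, f z ∂mixKernel σ N x :=
  measurable_integral_kernel_of_absolutelyContinuous (mixKernel_absolutelyContinuous hσ)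
    (volume_absolutelyContinuous_mixKernel hσ) f

theorem setIntegral_mixKernel (hσ : 0 < σ) (f : ℝ → ℝ) (x : ℝ) {s : Set ℝ}
    (hs : MeasurableSet s) :
    ∫ z in s, f z ∂mixKernel σ N x = ∫ z in s, mixDensity σ N x z * f z := by
  rw [mixKernel_apply hσ, setIntegral_withDensity_eq_setIntegral_toReal_smul
    (measurable_ofReal_mixDensity hσ x) (.of_forall fun _ => ENNReal.ofReal_lt_top) _ hs]
  simp only [ENNReal.toReal_ofReal (mixDensity_pos hσ x _).le, smul_eq_mul]

theorem integral_mixKernel (hσ : 0 < σ) (f : ℝ → ℝ) (x : ℝ) :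
    ∫ z, f z ∂mixKernel σ N x = ∫ z, mixDensity σ N x z * f z := by
  simpa only [setIntegral_univ] using setIntegral_mixKernel (N := N) hσ f x .univ

theorem integral_mixKernel_one (hσ : 0 < σ) (f : ℝ → ℝ) (x : ℝ) :
    ∫ z, f z ∂mixKernel σ 1 x = ∫ z, f z * gq σ (x - z) := by
  simp [integral_mixKernel hσ, mixDensity, mul_comm]

end MixKernel

/-! ### Truncated expectations -/

section TruncatedExpectation

theorem compl_setOf_le {Ω : Type*} (V : Ω → ℝ) (y : ℝ) : {ω | V ω ≤ y}ᶜ = {ω | V ω > y} := by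
  ext ω
  simp

variable {Ω : Type*} [MeasurableSpace Ω] {P : Measure Ω} {V : Ω → ℝ}

theorem measurableSet_setOf_le (hVm : Measurable V) (y : ℝ) : MeasurableSet {ω | V ω ≤ y} :=
  hVm measurableSet_Iic

theorem Phim_add_Phip (hVm : Measurable V) (hV : Integrable V P) (y : ℝ) :
    Phim P V y + Phip P V y = ∫ ω, V ω ∂P := by
  rw [Phip, ← compl_setOf_le]
  exact integral_add_compl (measurableSet_setOf_le hVm y) hV

theorem Pim_nonneg (P : Measure Ω) (V : Ω → ℝ) (y : ℝ) : 0 ≤ Pim P V y :=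
  ENNReal.toReal_nonneg

theorem Pip_nonneg (P : Measure Ω) (V : Ω → ℝ) (y : ℝ) : 0 ≤ Pip P V y :=
  ENNReal.toReal_nonneg

theorem measurable_Phim (P : Measure Ω) [SFinite P] (hVm : Measurable V) :
    Measurable (Phim P V) := by
  have hjoint : Measurable (Function.uncurry fun (y : ℝ) (ω : Ω) => {ω | V ω ≤ y}.indicator V ω) :=
    (hVm.comp measurable_snd).indicator
      (measurableSet_le (hVm.comp measurable_snd) measurable_fst)
  have heq (y : ℝ) : Phim P V y = ∫ ω, {ω | V ω ≤ y}.indicator V ω ∂P :=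
    (integral_indicator (measurableSet_setOf_le hVm y)).symm
  simpa only [← heq] using (hjoint.stronglyMeasurable.integral_prod_right (ν := P)).measurable

/-- The conditional mean `Ψ⁻(y) = E[V | V ≤ y]` above the lower end `m` of the support, continued
by `m` below. Unlike `Psim`, which is `0 / 0 = 0` where `V ≤ y` has probability zero, it is
nondecreasing. -/
noncomputable def lowerMean (P : Measure Ω) (V : Ω → ℝ) (m y : ℝ) : ℝ :=
  if y ≤ m then m else Psim P V y

theorem lowerMean_of_le {m y : ℝ} (hy : y ≤ m) : lowerMean P V m y = m :=
  if_pos hy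

theorem lowerMean_of_lt {m y : ℝ} (hy : m < y) : lowerMean P V m y = Psim P V y :=
  if_neg hy.not_ge

theorem SuppIoo.exists_abs_le {m M : ℝ} (h : SuppIoo P V m M) :
    ∃ C, 0 ≤ C ∧ ∀ᵐ ω ∂P, |V ω| ≤ C :=
  ⟨max |m| |M|, le_max_of_le_left (abs_nonneg m),
    h.2.1.mono fun _ hω => abs_le_max_abs_abs hω.1 hω.2⟩

section IsFiniteMeasure

variable [IsFiniteMeasure P]

theorem monotone_Pim (P : Measure Ω) [IsFiniteMeasure P] (V : Ω → ℝ) : Monotone (Pim P V) :=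
  fun _ _ hxy => measureReal_mono fun _ hω => le_trans hω hxy

theorem Phim_sub_mul_Pim (hV : Integrable V P) (c y : ℝ) :
    Phim P V y - c * Pim P V y = ∫ ω in {ω | V ω ≤ y}, (V ω - c) ∂P := by
  rw [integral_sub hV.integrableOn (integrable_const c)]
  simp [Phim, Pim, Measure.real, mul_comm]

theorem Phim_sub_mul_Pim_le_setIntegral (hVm : Measurable V) (hV : Integrable V P) (c : ℝ)
    {s : Set Ω} (hs : MeasurableSet s) :
    Phim P V c - c * Pim P V c ≤ ∫ ω in s, (V ω - c) ∂P := by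
  simpa only [Phim_sub_mul_Pim hV, sub_nonpos] using
    setIntegral_nonpos_le hs (hVm.sub_const c).stronglyMeasurable (hV.sub (integrable_const c))

theorem Phim_le_mul_Pim (hVm : Measurable V) (hV : Integrable V P) (y : ℝ) :
    Phim P V y ≤ y * Pim P V y := by
  simpa using Phim_sub_mul_Pim_le_setIntegral hVm hV y .empty

theorem mul_Pip_lt_Phip (hVm : Measurable V) (hV : Integrable V P) {y : ℝ}
    (hy : P {ω | V ω > y} ≠ 0) : y * Pip P V y < Phip P V y := by
  have h : ∫ _ in {ω | V ω > y}, y ∂P < ∫ ω in {ω | V ω > y}, V ω ∂P := by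
    refine integral_lt_integral_of_ae_le (integrable_const y)
      hV.integrableOn ?_ ?_
    · exact (ae_restrict_mem (hVm measurableSet_Ioi)).mono fun _ hω => le_of_lt hω
    · rwa [Measure.restrict_apply_self]
  simpa [Pip, Phip, Measure.real, mul_comm] using h

theorem mul_Pim_le_Phim (hV : Integrable V P) {m : ℝ} (hm : ∀ᵐ ω ∂P, m ≤ V ω) (y : ℝ) :
    m * Pim P V y ≤ Phim P V y := by
  rw [← sub_nonneg, Phim_sub_mul_Pim hV]
  exact integral_nonneg_of_ae (ae_restrict_of_ae (hm.mono fun _ => sub_nonneg.2))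

theorem abs_Phim_le {C : ℝ} (hC : ∀ᵐ ω ∂P, |V ω| ≤ C) (y : ℝ) :
    |Phim P V y| ≤ C * Pim P V y :=
  norm_setIntegral_le_of_norm_le_const_ae (f := V) (measure_lt_top P _) (ae_restrict_of_ae hC)

theorem abs_Phip_le {C : ℝ} (hC : ∀ᵐ ω ∂P, |V ω| ≤ C) (y : ℝ) :
    |Phip P V y| ≤ C * Pip P V y :=
  norm_setIntegral_le_of_norm_le_const_ae (f := V) (measure_lt_top P _) (ae_restrict_of_ae hC)

theorem Psim_le_Psim (hVm : Measurable V) (hV : Integrable V P) {x y : ℝ} (hxy : x ≤ y)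
    (hx : 0 < Pim P V x) : Psim P V x ≤ Psim P V y := by
  have hP : Pim P V x ≤ Pim P V y := monotone_Pim P V hxy
  have hincr : Phim P V x - x * Pim P V x ≤ Phim P V y - x * Pim P V y := by
    rw [Phim_sub_mul_Pim hV x y]
    exact Phim_sub_mul_Pim_le_setIntegral hVm hV x (measurableSet_setOf_le hVm y)
  rw [Psim, Psim, div_le_div_iff₀ hx (hx.trans_le hP)]
  nlinarith [mul_le_mul_of_nonneg_right (Phim_le_mul_Pim hVm hV x) (sub_nonneg.2 hP)]

theorem abs_Psim_le {C : ℝ} (hC0 : 0 ≤ C) (hC : ∀ᵐ ω ∂P, |V ω| ≤ C) (y : ℝ) :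
    |Psim P V y| ≤ C := by
  rw [Psim, abs_div, abs_of_nonneg (Pim_nonneg P V y)]
  exact div_le_of_le_mul₀ (Pim_nonneg P V y) hC0 (abs_Phim_le hC y)

namespace SuppIoo

variable {m M : ℝ}

theorem Pip_pos (h : SuppIoo P V m M) {y : ℝ} (hy : y < M) : 0 < Pip P V y :=
  ENNReal.toReal_pos (h.2.2.1 y hy).ne' (measure_ne_top _ _)

theorem Pim_pos (h : SuppIoo P V m M) {y : ℝ} (hy : m < y) : 0 < Pim P V y :=
  ENNReal.toReal_pos (h.2.2.2 y hy).ne' (measure_ne_top _ _)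

theorem lowerMean_mul_Pim_le_Phim (h : SuppIoo P V m M) (hV : Integrable V P) (y : ℝ) :
    lowerMean P V m y * Pim P V y ≤ Phim P V y := by
  rcases le_or_gt y m with hy | hy
  · rw [lowerMean_of_le hy]
    exact mul_Pim_le_Phim hV (h.2.1.mono fun _ => And.left) y
  · rw [lowerMean_of_lt hy, Psim, div_mul_cancel₀ _ (h.Pim_pos hy).ne']

end SuppIoo

end IsFiniteMeasure

variable [IsProbabilityMeasure P]

theorem Pim_add_Pip (P : Measure Ω) [IsProbabilityMeasure P] (hVm : Measurable V) (y : ℝ) :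
    Pim P V y + Pip P V y = 1 := by
  rw [Pip, ← compl_setOf_le]
  exact probReal_add_probReal_compl (measurableSet_setOf_le hVm y)

theorem Phim_le_integral_mul_Pim (hVm : Measurable V) (hV : Integrable V P) (y : ℝ) :
    Phim P V y ≤ (∫ ω, V ω ∂P) * Pim P V y := by
  have hmul := Phim_le_mul_Pim hVm hV y
  have hcompl : Phim P V y - y * Pim P V y ≤ ∫ ω, V ω ∂P - y := by
    simpa [integral_sub hV] using Phim_sub_mul_Pim_le_setIntegral hVm hV y .univ
  rcases le_total y (∫ ω, V ω ∂P) with h | h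
  · exact hmul.trans (mul_le_mul_of_nonneg_right h (Pim_nonneg P V y))
  · have := mul_nonneg (sub_nonneg.2 h) (Pip_nonneg P V y)
    have := Pim_add_Pip P hVm y
    nlinarith

theorem integral_mul_Pip_le_Phip (hVm : Measurable V) (hV : Integrable V P) (y : ℝ) :
    (∫ ω, V ω ∂P) * Pip P V y ≤ Phip P V y := by
  rw [eq_sub_of_add_eq' (Pim_add_Pip P hVm y), eq_sub_of_add_eq' (Phim_add_Phip hVm hV y)]
  linarith [Phim_le_integral_mul_Pim hVm hV y]

namespace SuppIoo

variable {m M : ℝ}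

theorem lt_integral (h : SuppIoo P V m M) (hV : Integrable V P) : m < ∫ ω, V ω ∂P := by
  simpa using integral_lt_integral_of_ae_le (integrable_const m) hV
    (h.2.1.mono fun _ => And.left) (h.2.2.1 m h.1).ne'

theorem integral_lt (h : SuppIoo P V m M) (hV : Integrable V P) : ∫ ω, V ω ∂P < M := by
  obtain ⟨y, hmy, hyM⟩ := exists_between h.1
  simpa using integral_lt_integral_of_ae_le hV (integrable_const M)
    (h.2.1.mono fun _ => And.right)
    ((h.2.2.2 y hmy).trans_le (measure_mono fun _ hω => lt_of_le_of_lt hω hyM)).ne'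

theorem Psim_integral_lt (h : SuppIoo P V m M) (hVm : Measurable V) (hV : Integrable V P) :
    Psim P V (∫ ω, V ω ∂P) < ∫ ω, V ω ∂P := by
  have hlt := mul_Pip_lt_Phip hVm hV (h.2.2.1 _ (h.integral_lt hV)).ne'
  rw [eq_sub_of_add_eq' (Pim_add_Pip P hVm _), eq_sub_of_add_eq' (Phim_add_Phip hVm hV _)] at hlt
  rw [Psim, div_lt_iff₀ (h.Pim_pos (h.lt_integral hV))]
  linarith

theorem lowerMean_mem_Icc (h : SuppIoo P V m M) (hVm : Measurable V) (hV : Integrable V P)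
    (y : ℝ) : lowerMean P V m y ∈ Icc m (∫ ω, V ω ∂P) := by
  rcases le_or_gt y m with hy | hy
  · rw [lowerMean_of_le hy]
    exact left_mem_Icc.2 (h.lt_integral hV).le
  · rw [lowerMean_of_lt hy, Psim, mem_Icc, le_div_iff₀ (h.Pim_pos hy), div_le_iff₀ (h.Pim_pos hy)]
    exact ⟨mul_Pim_le_Phim hV (h.2.1.mono fun _ => And.left) y, Phim_le_integral_mul_Pim hVm hV y⟩

theorem monotone_lowerMean (h : SuppIoo P V m M) (hVm : Measurable V) (hV : Integrable V P) :
    Monotone (lowerMean P V m) := by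
  intro x y hxy
  rcases le_or_gt x m with hx | hx
  · rw [lowerMean_of_le hx]
    exact (h.lowerMean_mem_Icc hVm hV y).1
  · rw [lowerMean_of_lt hx, lowerMean_of_lt (hx.trans_le hxy)]
    exact Psim_le_Psim hVm hV hxy (h.Pim_pos hx)

end SuppIoo

end TruncatedExpectation

/-! ### The comparison operator -/

section ComparisonOp

variable {κ γ : Kernel ℝ ℝ} {f g : ℝ → ℝ} {a b c : ℝ}

/-- The integrand of the right-hand side of (C⁻) with `f` in place of `Ψ⁻ ∘ l`: the constant `c`
on `[0, ∞)` and the smoothing of `f` by `γ` on `(-∞, 0)`. -/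
noncomputable def profile (γ : Kernel ℝ ℝ) (c : ℝ) (f : ℝ → ℝ) (z : ℝ) : ℝ :=
  if 0 ≤ z then c else ∫ y, f y ∂γ z

/-- The operator whose value at `Ψ⁻ ∘ l` is the right-hand side of (C⁻), for general kernels. -/
noncomputable def comparisonOp (κ γ : Kernel ℝ ℝ) (c : ℝ) (f : ℝ → ℝ) (x : ℝ) : ℝ :=
  ∫ z, profile γ c f z ∂κ x

theorem measurable_profile [IsSFiniteKernel γ] (hf : Measurable f) : Measurable (profile γ c f) :=
  measurable_const.ite measurableSet_Ici hf.stronglyMeasurable.integral_kernel.measurable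

theorem tendsto_profile_atTop (γ : Kernel ℝ ℝ) (c : ℝ) (f : ℝ → ℝ) :
    Tendsto (profile γ c f) atTop (𝓝 c) :=
  tendsto_const_nhds.congr' <| (eventually_ge_atTop 0).mono fun _ hz => (if_pos hz).symm

variable [IsMarkovKernel γ]

theorem profile_mem_Icc (hc : c ∈ Icc a b) (hf : Measurable f) (hfm : ∀ y, f y ∈ Icc a b)
    (z : ℝ) : profile γ c f z ∈ Icc a b := by
  unfold profile
  split_ifs
  · exact hc
  · exact integral_mem_Icc hf hfm

theorem integrable_profile {μ : Measure ℝ} [IsFiniteMeasure μ] (hc : c ∈ Icc a b)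
    (hf : Measurable f) (hfm : ∀ y, f y ∈ Icc a b) : Integrable (profile γ c f) μ :=
  integrable_of_mem_Icc (measurable_profile hf) (profile_mem_Icc hc hf hfm)

theorem profile_mono (hf : Measurable f) (hg : Measurable g) (hfm : ∀ y, f y ∈ Icc a b)
    (hgm : ∀ y, g y ∈ Icc a b) (hfg : f ≤ g) : profile γ c f ≤ profile γ c g := by
  intro z
  unfold profile
  split_ifs
  · exact le_rfl
  · exact integral_mono (integrable_of_mem_Icc hf hfm) (integrable_of_mem_Icc hg hgm) hfg

theorem monotone_profile (hγ : StochasticallyMonotone γ) (hf : Monotone f)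
    (hfm : ∀ y, f y ∈ Icc a c) : Monotone (profile γ c f) := by
  have hac : a ≤ c := (hfm 0).1.trans (hfm 0).2
  intro x y hxy
  by_cases hy : 0 ≤ y
  · rw [profile.eq_def γ c f y, if_pos hy]
    exact (profile_mem_Icc (right_mem_Icc.2 hac) hf.measurable hfm x).2
  · rw [profile, profile, if_neg hy, if_neg fun hx => hy (hx.trans hxy)]
    exact hγ hf hfm hxy

theorem monotone_comparisonOp (hκ : StochasticallyMonotone κ) (hγ : StochasticallyMonotone γ)
    (hf : Monotone f) (hfm : ∀ y, f y ∈ Icc a c) : Monotone (comparisonOp κ γ c f) :=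
  have hac : a ≤ c := (hfm 0).1.trans (hfm 0).2
  hκ (monotone_profile hγ hf hfm) (profile_mem_Icc (right_mem_Icc.2 hac) hf.measurable hfm)

variable [IsMarkovKernel κ]

theorem comparisonOp_mem_Icc (hc : c ∈ Icc a b) (hf : Measurable f) (hfm : ∀ y, f y ∈ Icc a b)
    (x : ℝ) : comparisonOp κ γ c f x ∈ Icc a b :=
  integral_mem_Icc (measurable_profile hf) (profile_mem_Icc hc hf hfm)

theorem comparisonOp_mono (hc : c ∈ Icc a b) (hf : Measurable f) (hg : Measurable g)
    (hfm : ∀ y, f y ∈ Icc a b) (hgm : ∀ y, g y ∈ Icc a b) (hfg : f ≤ g) :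
    comparisonOp κ γ c f ≤ comparisonOp κ γ c g :=
  fun _ => integral_mono (integrable_profile hc hf hfm) (integrable_profile hc hg hgm)
    (profile_mono hf hg hfm hgm hfg)

theorem lt_comparisonOp {x : ℝ} (hκ : volume ≪ κ x) (hac : a < c) (hf : Measurable f)
    (hfm : ∀ y, f y ∈ Icc a c) : a < comparisonOp κ γ c f x := by
  have hc : c ∈ Icc a c := right_mem_Icc.2 hac.le
  have hpos : κ x {z | a < profile γ c f z} ≠ 0 := fun h => by
    have hnonneg : volume (Ici (0 : ℝ)) = 0 :=
      measure_mono_null (fun z (hz : 0 ≤ z) => by simpa [profile, hz]) (hκ h)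
    simp at hnonneg
  have hlt := integral_lt_integral_of_ae_le (integrable_const a) (integrable_profile hc hf hfm)
    (.of_forall fun z => (profile_mem_Icc hc hf hfm z).1) hpos
  rwa [integral_const, probReal_univ, one_smul] at hlt

theorem exists_monotone_fixedPoint_comparisonOp (hκ : StochasticallyMonotone κ)
    (hγ : StochasticallyMonotone γ) {ψ : ℝ → ℝ} (hψ : Monotone ψ) (hψm : ∀ y, ψ y ∈ Icc a c)
    (hcb : c ≤ b) :
    ∃ l : ℝ → ℝ, Monotone l ∧ (∀ x, l x ∈ Icc a b) ∧ comparisonOp κ γ c (ψ ∘ l) = l ∧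
      ∀ F : ℝ → ℝ, Measurable F → (∀ x, F x ∈ Icc a b) → comparisonOp κ γ c (ψ ∘ F) ≤ F →
        l ≤ F := by
  have hc : c ∈ Icc a b := ⟨(hψm 0).1.trans (hψm 0).2, hcb⟩
  have hψb (y : ℝ) : ψ y ∈ Icc a b := Icc_subset_Icc_right hcb (hψm y)
  have hab : a ≤ b := hc.1.trans hc.2
  have : Fact (a ≤ b) := ⟨hab⟩
  -- Off the measurable functions the operator takes junk values, hence the projection.
  let T (l : ℝ → Icc a b) (x : ℝ) : Icc a b :=
    projIcc a b hab (comparisonOp κ γ c (fun y => ψ (l y)) x)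
  have hmeas {l : ℝ → Icc a b} (hl : Measurable l) : Measurable fun y => ψ (l y) :=
    hψ.measurable.comp (measurable_subtype_coe.comp hl)
  have hT {l : ℝ → Icc a b} (hl : Measurable l) (x : ℝ) :
      (T l x : ℝ) = comparisonOp κ γ c (fun y => ψ (l y)) x :=
    congrArg Subtype.val <|
      projIcc_of_mem hab (comparisonOp_mem_Icc hc (hmeas hl) (fun _ => hψb _) x)
  obtain ⟨l, hl, hfix, hmin⟩ := exists_monotone_fixedPoint_le_supersolution (T := T)
    (S := {l | Measurable l}) (fun l hl => hl.measurable)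
    (fun f hf g hg hfg x => monotone_projIcc hab <| comparisonOp_mono hc (hmeas hf) (hmeas hg)
      (fun _ => hψb _) (fun _ => hψb _) (fun y => hψ (hfg y)) x)
    (fun f hf => (monotone_projIcc hab).comp <|
      monotone_comparisonOp hκ hγ (fun x y hxy => hψ (hf hxy)) fun _ => hψm _)
  refine ⟨fun x => l x, hl, fun x => (l x).2, funext fun x => ?_, fun F hF hFm hsup => ?_⟩
  · exact (hT hl.measurable x).symm.trans (congrArg Subtype.val (congrFun hfix x))
  · have hF' : Measurable fun x => (⟨F x, hFm x⟩ : Icc a b) := hF.subtype_mk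
    exact hmin _ hF' fun x => Subtype.coe_le_coe.1 ((hT hF' x).trans_le (hsup x))

end ComparisonOp

/-! ### Solutions of (C⁻) -/

section SolvesCm

variable {σ : ℝ} {N : ℕ} [NeZero N]

section Limits

variable {γ : Kernel ℝ ℝ} [IsMarkovKernel γ] {f : ℝ → ℝ} {a b c d : ℝ}

theorem tendsto_comparisonOp_atTop (hc : c ∈ Icc a b) (hf : Measurable f)
    (hfm : ∀ y, f y ∈ Icc a b) :
    Tendsto (comparisonOp (mixKernel σ N) γ c f) atTop (𝓝 c) :=
  tendsto_integral_mixKernel_atTop (measurable_profile hf) (profile_mem_Icc hc hf hfm)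
    (tendsto_profile_atTop γ c f)

theorem tendsto_comparisonOp_atBot {K : ℕ} [NeZero K] (hc : c ∈ Icc a b) (hf : Measurable f)
    (hfm : ∀ y, f y ∈ Icc a b) (hd : Tendsto f atBot (𝓝 d)) :
    Tendsto (comparisonOp (mixKernel σ N) (mixKernel σ K) c f) atBot (𝓝 d) :=
  tendsto_integral_mixKernel_atBot (measurable_profile hf) (profile_mem_Icc hc hf hfm) <|
    (tendsto_integral_mixKernel_atBot hf hfm hd).congr' <|
      (eventually_lt_atBot 0).mono fun _ hz => (if_neg hz.not_ge).symm

end Limits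

theorem comparisonOp_mixKernel_eq {f : ℝ → ℝ} {a b c : ℝ} (hσ : 0 < σ) (hc : c ∈ Icc a b)
    (hf : Measurable f) (hfm : ∀ y, f y ∈ Icc a b) (x : ℝ) :
    comparisonOp (mixKernel σ N) (mixKernel σ 1) c f x =
      c * (∫ z in Ioi (0 : ℝ), mixDensity σ N x z) +
        ∫ z in Iio (0 : ℝ), mixDensity σ N x z * ∫ y, f y * gq σ (z - y) := by
  rw [comparisonOp, ← integral_add_compl measurableSet_Ici (integrable_profile hc hf hfm),
    compl_Ici, setIntegral_mixKernel hσ _ _ measurableSet_Ici,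
    setIntegral_mixKernel hσ _ _ measurableSet_Iio, integral_Ici_eq_integral_Ioi,
    ← integral_const_mul]
  refine congrArg₂ (· + ·) (setIntegral_congr_fun measurableSet_Ioi fun z (hz : 0 < z) => ?_)
    (setIntegral_congr_fun measurableSet_Iio fun z (hz : z < 0) => ?_)
  · simp only [profile, hz.le, if_true, mul_comm]
  · simp only [profile, hz.not_ge, if_false, integral_mixKernel_one hσ]

variable {Ω : Type*} [MeasurableSpace Ω] {P : Measure Ω} [IsProbabilityMeasure P] {V : Ω → ℝ}
  {m M c : ℝ} {L : ℝ → ℝ}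

theorem measurable_Psim (P : Measure Ω) [IsFiniteMeasure P] (hVm : Measurable V) :
    Measurable (Psim P V) :=
  (measurable_Phim P hVm).div (monotone_Pim P V).measurable

theorem integral_mem_Icc_of_ae_abs_le {C : ℝ} (hC : ∀ᵐ ω ∂P, |V ω| ≤ C) :
    ∫ ω, V ω ∂P ∈ Icc (-C) C :=
  abs_le.1 <| by simpa using norm_integral_le_of_norm_le_const (f := V) hC

namespace SuppIoo

theorem solvesCm_iff (h : SuppIoo P V m M) (hVm : Measurable V) (hσ : 0 < σ) (hL : Measurable L) :
    SolvesCm P V σ N L ↔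
      comparisonOp (mixKernel σ N) (mixKernel σ 1) (∫ ω, V ω ∂P) (Psim P V ∘ L) = L := by
  obtain ⟨C, hC0, hC⟩ := h.exists_abs_le
  rw [eq_comm, funext_iff]
  refine forall_congr' fun x => ?_
  rw [comparisonOp_mixKernel_eq hσ (integral_mem_Icc_of_ae_abs_le hC)
    ((measurable_Psim P hVm).comp hL) (fun y => abs_le.1 (abs_Psim_le hC0 hC (L y)))]
  rfl

theorem tendsto_atTop_of_solvesCm (h : SuppIoo P V m M) (hVm : Measurable V) (hσ : 0 < σ)
    (hL : Measurable L) (hsol : SolvesCm P V σ N L) :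
    Tendsto L atTop (𝓝 (∫ ω, V ω ∂P)) := by
  obtain ⟨C, hC0, hC⟩ := h.exists_abs_le
  rw [← (h.solvesCm_iff hVm hσ hL).1 hsol]
  exact tendsto_comparisonOp_atTop (integral_mem_Icc_of_ae_abs_le hC)
    ((measurable_Psim P hVm).comp hL) (fun y => abs_le.1 (abs_Psim_le hC0 hC _))

theorem Psim_eq_of_solvesCm (h : SuppIoo P V m M) (hVm : Measurable V) (hσ : 0 < σ)
    (hL : Measurable L) (hsol : SolvesCm P V σ N L) (hc : ∀ᶠ x in atBot, L x = c) :
    Psim P V c = c := by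
  obtain ⟨C, hC0, hC⟩ := h.exists_abs_le
  have hlim : Tendsto L atBot (𝓝 (Psim P V c)) := by
    rw [← (h.solvesCm_iff hVm hσ hL).1 hsol]
    exact tendsto_comparisonOp_atBot (integral_mem_Icc_of_ae_abs_le hC)
      ((measurable_Psim P hVm).comp hL) (fun y => abs_le.1 (abs_Psim_le hC0 hC _))
      (tendsto_const_nhds.congr' (hc.mono fun _ hx => congrArg (Psim P V) hx.symm))
  exact tendsto_nhds_unique (hlim.congr' hc) tendsto_const_nhds

theorem not_solvesCm_const (h : SuppIoo P V m M) (hVm : Measurable V) (hV : Integrable V P)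
    (hσ : 0 < σ) (c : ℝ) : ¬SolvesCm P V σ N fun _ => c := by
  intro hsol
  have hcE : c = ∫ ω, V ω ∂P := tendsto_nhds_unique tendsto_const_nhds
    (h.tendsto_atTop_of_solvesCm hVm hσ measurable_const hsol)
  have hfix : Psim P V c = c :=
    h.Psim_eq_of_solvesCm hVm hσ measurable_const hsol (.of_forall fun _ => rfl)
  exact (h.Psim_integral_lt hVm hV).ne (hcE ▸ hfix)

theorem Psim_comp_eq_lowerMean_comp (h : SuppIoo P V m M) (hVm : Measurable V) (hσ : 0 < σ)
    (hL : Monotone L) (hmL : ∀ x, m ≤ L x) (hsol : SolvesCm P V σ N L) :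
    Psim P V ∘ L = lowerMean P V m ∘ L := by
  funext x
  rcases (hmL x).eq_or_lt with hx | hx
  · have hbot : ∀ᶠ y in atBot, L y = m := (eventually_le_atBot x).mono fun y hy =>
      le_antisymm ((hL hy).trans_eq hx.symm) (hmL y)
    have hfix : Psim P V m = m := h.Psim_eq_of_solvesCm hVm hσ hL.measurable hsol hbot
    simp only [Function.comp_apply, ← hx, hfix, lowerMean_of_le le_rfl]
  · exact (lowerMean_of_lt hx).symm

end SuppIoo

end SolvesCm

/-! ### Solutions of (E) -/

section SolvesE

variable {Ω : Type*} [MeasurableSpace Ω] {P : Measure Ω} {V : Ω → ℝ}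
  {m M σ C : ℝ} {N : ℕ} [NeZero N] {F : ℝ → ℝ}

theorem phip_eq (P : Measure Ω) (V : Ω → ℝ) (hσ : 0 < σ) (F : ℝ → ℝ) (x : ℝ) :
    phip P V σ F x =
      (∫ z, Phip P V (F z) ∂mixKernel σ 1 x) / ∫ z, Pip P V (F z) ∂mixKernel σ 1 x := by
  rw [phip, integral_mixKernel_one hσ, integral_mixKernel_one hσ]

theorem phim_eq (P : Measure Ω) (V : Ω → ℝ) (hσ : 0 < σ) (F : ℝ → ℝ) (x : ℝ) :
    phim P V σ F x =
      (∫ z, Phim P V (F z) ∂mixKernel σ 1 x) / ∫ z, Pim P V (F z) ∂mixKernel σ 1 x := by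
  rw [phim, integral_mixKernel_one hσ, integral_mixKernel_one hσ]

theorem measurable_phig (P : Measure Ω) (V : Ω → ℝ) (hσ : 0 < σ) (F : ℝ → ℝ) :
    Measurable (phig P V σ F) := by
  refine Measurable.ite measurableSet_Ici ?_ ?_
  · rw [funext (phip_eq P V hσ F)]
    exact (measurable_integral_mixKernel hσ _).div (measurable_integral_mixKernel hσ _)
  · rw [funext (phim_eq P V hσ F)]
    exact (measurable_integral_mixKernel hσ _).div (measurable_integral_mixKernel hσ _)

theorem SolvesE.eq_integral (hE : SolvesE P V σ N F) (hσ : 0 < σ) :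
    F = fun x => ∫ z, phig P V σ F z ∂mixKernel σ N x :=
  funext fun x => (hE x).trans (integral_mixKernel hσ _ x).symm

theorem SolvesE.measurable (hE : SolvesE P V σ N F) (hσ : 0 < σ) : Measurable F := by
  rw [hE.eq_integral hσ]
  exact measurable_integral_mixKernel hσ _

variable [IsProbabilityMeasure P]

theorem integrable_Pim_comp {μ : Measure ℝ} [IsFiniteMeasure μ] (hF : Measurable F) :
    Integrable (fun z => Pim P V (F z)) μ :=
  integrable_of_mem_Icc ((monotone_Pim P V).measurable.comp hF)
    fun _ => ⟨Pim_nonneg P V _, measureReal_le_one⟩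

theorem integrable_Pip_comp {μ : Measure ℝ} [IsFiniteMeasure μ] (hVm : Measurable V)
    (hF : Measurable F) : Integrable (fun z => Pip P V (F z)) μ := by
  simp only [fun y => eq_sub_of_add_eq' (Pim_add_Pip P hVm y)]
  exact (integrable_const 1).sub (integrable_Pim_comp hF)

theorem integrable_Phim_comp {μ : Measure ℝ} [IsFiniteMeasure μ] (hVm : Measurable V)
    (hC : ∀ᵐ ω ∂P, |V ω| ≤ C) (hF : Measurable F) : Integrable (fun z => Phim P V (F z)) μ :=
  ((integrable_Pim_comp hF).const_mul C).mono'
    ((measurable_Phim P hVm).comp hF).aestronglyMeasurable (.of_forall fun _ => abs_Phim_le hC _)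

theorem integrable_Phip_comp {μ : Measure ℝ} [IsFiniteMeasure μ] (hVm : Measurable V)
    (hV : Integrable V P) (hC : ∀ᵐ ω ∂P, |V ω| ≤ C) (hF : Measurable F) :
    Integrable (fun z => Phip P V (F z)) μ := by
  simp only [fun y => eq_sub_of_add_eq' (Phim_add_Phip hVm hV y)]
  exact (integrable_const _).sub (integrable_Phim_comp hVm hC hF)

theorem phig_mem_Icc (hVm : Measurable V) (hC0 : 0 ≤ C) (hC : ∀ᵐ ω ∂P, |V ω| ≤ C) (hσ : 0 < σ)
    (hF : Measurable F) (x : ℝ) : phig P V σ F x ∈ Icc (-C) C := by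
  refine abs_le.1 ?_
  unfold phig
  split_ifs
  · rw [phip_eq P V hσ]
    exact abs_integral_div_integral_le hC0 (integrable_Pip_comp hVm hF) fun z => abs_Phip_le hC _
  · rw [phim_eq P V hσ]
    exact abs_integral_div_integral_le hC0 (integrable_Pim_comp hF) fun z => abs_Phim_le hC _

theorem phim_eq_integral_of_ae_Pip_eq_zero (hVm : Measurable V) (hV : Integrable V P)
    (hC : ∀ᵐ ω ∂P, |V ω| ≤ C) (hσ : 0 < σ) (hz : ∀ᵐ z, Pip P V (F z) = 0) (x : ℝ) :
    phim P V σ F x = ∫ ω, V ω ∂P := by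
  have hae : ∀ᵐ z ∂mixKernel σ 1 x, Pip P V (F z) = 0 :=
    (mixKernel_absolutelyContinuous hσ x).ae_le hz
  have hPim : ∀ᵐ z ∂mixKernel σ 1 x, Pim P V (F z) = 1 := hae.mono fun z hz => by
    linarith [Pim_add_Pip P hVm (F z)]
  have hPhim : ∀ᵐ z ∂mixKernel σ 1 x, Phim P V (F z) = ∫ ω, V ω ∂P := hae.mono fun z hz => by
    have hPhip : Phip P V (F z) = 0 := by simpa [hz] using abs_Phip_le hC (F z)
    linarith [Phim_add_Phip hVm hV (F z)]
  rw [phim_eq P V hσ, integral_congr_ae hPhim, integral_congr_ae hPim]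
  simp

theorem phip_eq_integral_of_ae_Pim_eq_zero (hVm : Measurable V) (hV : Integrable V P)
    (hC : ∀ᵐ ω ∂P, |V ω| ≤ C) (hσ : 0 < σ) (hz : ∀ᵐ z, Pim P V (F z) = 0) (x : ℝ) :
    phip P V σ F x = ∫ ω, V ω ∂P := by
  have hae : ∀ᵐ z ∂mixKernel σ 1 x, Pim P V (F z) = 0 :=
    (mixKernel_absolutelyContinuous hσ x).ae_le hz
  have hPip : ∀ᵐ z ∂mixKernel σ 1 x, Pip P V (F z) = 1 := hae.mono fun z hz => by
    linarith [Pim_add_Pip P hVm (F z)]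
  have hPhip : ∀ᵐ z ∂mixKernel σ 1 x, Phip P V (F z) = ∫ ω, V ω ∂P := hae.mono fun z hz => by
    have hPhim : Phim P V (F z) = 0 := by simpa [hz] using abs_Phim_le hC (F z)
    linarith [Phim_add_Phip hVm hV (F z)]
  rw [phip_eq P V hσ, integral_congr_ae hPhip, integral_congr_ae hPip]
  simp

theorem ae_eq_zero_of_integral_mixKernel_eq_zero {f : ℝ → ℝ} {x : ℝ} (hσ : 0 < σ)
    (hf : Integrable f (mixKernel σ N x)) (hf0 : 0 ≤ f)
    (h0 : ∫ z, f z ∂mixKernel σ N x = 0) : ∀ᵐ z, f z = 0 :=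
  (volume_absolutelyContinuous_mixKernel hσ x).ae_le ((integral_eq_zero_iff_of_nonneg hf0 hf).1 h0)

namespace SuppIoo

theorem integral_Pip_pos (h : SuppIoo P V m M) (hVm : Measurable V) (hV : Integrable V P)
    (hσ : 0 < σ) (hE : SolvesE P V σ N F) (x : ℝ) :
    0 < ∫ z, Pip P V (F z) ∂mixKernel σ 1 x := by
  obtain ⟨C, hC0, hC⟩ := h.exists_abs_le
  have hF := hE.measurable hσ
  refine (integral_nonneg fun z => Pip_nonneg P V _).lt_of_ne' fun h0 => ?_
  have hz : ∀ᵐ z, Pip P V (F z) = 0 := ae_eq_zero_of_integral_mixKernel_eq_zero hσ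
    (integrable_Pip_comp hVm hF) (fun z => Pip_nonneg P V _) h0
  have hlim : Tendsto F atBot (𝓝 (∫ ω, V ω ∂P)) := by
    rw [hE.eq_integral hσ]
    refine tendsto_integral_mixKernel_atBot (measurable_phig P V hσ F)
      (phig_mem_Icc hVm hC0 hC hσ hF) (tendsto_const_nhds.congr' ?_)
    filter_upwards [eventually_lt_atBot 0] with y hy
    rw [phig, if_neg hy.not_ge, phim_eq_integral_of_ae_Pip_eq_zero hVm hV hC hσ hz]
  obtain ⟨y, hy0, hyM⟩ := ((frequently_atBot_of_ae hz).and_eventually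
    (hlim.eventually_lt_const (h.integral_lt hV))).exists
  exact (h.Pip_pos hyM).ne' hy0

theorem integral_Pim_pos (h : SuppIoo P V m M) (hVm : Measurable V) (hV : Integrable V P)
    (hσ : 0 < σ) (hE : SolvesE P V σ N F) (x : ℝ) :
    0 < ∫ z, Pim P V (F z) ∂mixKernel σ 1 x := by
  obtain ⟨C, hC0, hC⟩ := h.exists_abs_le
  have hF := hE.measurable hσ
  refine (integral_nonneg fun z => Pim_nonneg P V _).lt_of_ne' fun h0 => ?_
  have hz : ∀ᵐ z, Pim P V (F z) = 0 := ae_eq_zero_of_integral_mixKernel_eq_zero hσ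
    (integrable_Pim_comp hF) (fun z => Pim_nonneg P V _) h0
  have hlim : Tendsto F atTop (𝓝 (∫ ω, V ω ∂P)) := by
    rw [hE.eq_integral hσ]
    refine tendsto_integral_mixKernel_atTop (measurable_phig P V hσ F)
      (phig_mem_Icc hVm hC0 hC hσ hF) (tendsto_const_nhds.congr' ?_)
    filter_upwards [eventually_ge_atTop 0] with y hy
    rw [phig, if_pos hy, phip_eq_integral_of_ae_Pim_eq_zero hVm hV hC hσ hz]
  obtain ⟨y, hy0, hmy⟩ := ((frequently_atTop_of_ae hz).and_eventually
    (hlim.eventually_const_lt (h.lt_integral hV))).exists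
  exact (h.Pim_pos hmy).ne' hy0

theorem integral_le_phip (h : SuppIoo P V m M) (hVm : Measurable V) (hV : Integrable V P)
    (hσ : 0 < σ) (hE : SolvesE P V σ N F) (x : ℝ) : ∫ ω, V ω ∂P ≤ phip P V σ F x := by
  obtain ⟨C, -, hC⟩ := h.exists_abs_le
  have hF := hE.measurable hσ
  rw [phip_eq P V hσ, le_div_iff₀ (h.integral_Pip_pos hVm hV hσ hE x), ← integral_const_mul]
  exact integral_mono ((integrable_Pip_comp hVm hF).const_mul _) (integrable_Phip_comp hVm hV hC hF)
    fun z => integral_mul_Pip_le_Phip hVm hV (F z)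

theorem integral_lowerMean_le_phim (h : SuppIoo P V m M) (hVm : Measurable V)
    (hV : Integrable V P) (hσ : 0 < σ) (hE : SolvesE P V σ N F) (x : ℝ) :
    ∫ z, lowerMean P V m (F z) ∂mixKernel σ 1 x ≤ phim P V σ F x := by
  obtain ⟨C, -, hC⟩ := h.exists_abs_le
  have hF := hE.measurable hσ
  have hlow := h.monotone_lowerMean hVm hV
  have hlowF : Integrable (fun z => lowerMean P V m (F z)) (mixKernel σ 1 x) :=
    integrable_of_mem_Icc (hlow.measurable.comp hF) fun _ => h.lowerMean_mem_Icc hVm hV _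
  have hPimF : Integrable (fun z => Pim P V (F z)) (mixKernel σ 1 x) := integrable_Pim_comp hF
  have hmul : Integrable (fun z => lowerMean P V m (F z) * Pim P V (F z)) (mixKernel σ 1 x) :=
    hlowF.mul_bdd (c := 1) hPimF.aestronglyMeasurable <| .of_forall fun z => by
      rw [Real.norm_of_nonneg (Pim_nonneg P V _)]
      exact measureReal_le_one
  have hvary : Monovary (fun z => lowerMean P V m (F z)) fun z => Pim P V (F z) :=
    (hlow.monovary (monotone_Pim P V)).comp_right F
  rw [phim_eq P V hσ, le_div_iff₀ (h.integral_Pim_pos hVm hV hσ hE x)]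
  exact (integral_mul_integral_le_of_monovary hvary hlowF hPimF hmul).trans <|
    integral_mono hmul (integrable_Phim_comp hVm hC hF) fun z => h.lowerMean_mul_Pim_le_Phim hV _

theorem comparisonOp_lowerMean_le_of_solvesE (h : SuppIoo P V m M) (hVm : Measurable V)
    (hV : Integrable V P) (hσ : 0 < σ) (hE : SolvesE P V σ N F) :
    comparisonOp (mixKernel σ N) (mixKernel σ 1) (∫ ω, V ω ∂P) (lowerMean P V m ∘ F) ≤ F := by
  obtain ⟨C, hC0, hC⟩ := h.exists_abs_le
  have hF := hE.measurable hσ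
  intro x
  rw [congrFun (hE.eq_integral hσ) x]
  refine integral_mono (integrable_profile (right_mem_Icc.2 (h.lt_integral hV).le)
      ((h.monotone_lowerMean hVm hV).measurable.comp hF) fun _ => h.lowerMean_mem_Icc hVm hV _)
    (integrable_of_mem_Icc (measurable_phig P V hσ F) (phig_mem_Icc hVm hC0 hC hσ hF)) fun z => ?_
  unfold profile phig
  split_ifs
  · exact h.integral_le_phip hVm hV hσ hE z
  · exact h.integral_lowerMean_le_phim hVm hV hσ hE z

end SuppIoo

end SolvesE


/-- Among nondecreasing functions with values in `[m,M]`, (C⁻) has a minimal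
solution; it is not constant, and it bounds from below every solution of (E) with values in
`[m,M]`. -/
theorem stmt14 {Ω : Type*} [MeasurableSpace Ω] (P : Measure Ω) [IsProbabilityMeasure P]
    (V : Ω → ℝ) (hVmeas : Measurable V) (hV : Integrable V P)
    (m M : ℝ) (hsupp : SuppIoo P V m M)
    (σ : ℝ) (hσ : 0 < σ) (N : ℕ) (hN : 1 ≤ N) :
    ∃ lstar : ℝ → ℝ, Monotone lstar ∧ (∀ x, lstar x ∈ Set.Icc m M) ∧
      SolvesCm P V σ N lstar ∧
      (∀ L : ℝ → ℝ, Monotone L → (∀ x, L x ∈ Set.Icc m M) → SolvesCm P V σ N L →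
        ∀ x, lstar x ≤ L x) ∧
      (¬ ∃ c : ℝ, ∀ x, lstar x = c) ∧
      (∀ F : ℝ → ℝ, (∀ x, F x ∈ Set.Icc m M) → SolvesE P V σ N F →
        ∀ x, lstar x ≤ F x) := by
  have : NeZero N := ⟨by lia⟩
  obtain ⟨l, hl, hlm, hfix, hmin⟩ := exists_monotone_fixedPoint_comparisonOp
    (stochasticallyMonotone_mixKernel (σ := σ) (N := N))
    (stochasticallyMonotone_mixKernel (σ := σ) (N := 1)) (hsupp.monotone_lowerMean hVmeas hV)
    (hsupp.lowerMean_mem_Icc hVmeas hV) (hsupp.integral_lt hV).le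
  have hml (x : ℝ) : m < l x := by
    rw [← hfix]
    exact lt_comparisonOp (volume_absolutelyContinuous_mixKernel hσ x) (hsupp.lt_integral hV)
      ((hsupp.monotone_lowerMean hVmeas hV).comp hl).measurable
      fun _ => hsupp.lowerMean_mem_Icc hVmeas hV _
  have hsol : SolvesCm P V σ N l := by
    rw [hsupp.solvesCm_iff hVmeas hσ hl.measurable]
    exact (congrArg _ (funext fun x => (lowerMean_of_lt (hml x)).symm)).trans hfix
  refine ⟨l, hl, hlm, hsol, fun L hL hLm hLsol => hmin L hL.measurable hLm ?_, ?_,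
    fun F hFm hF => hmin F (hF.measurable hσ) hFm
      (hsupp.comparisonOp_lowerMean_le_of_solvesE hVmeas hV hσ hF)⟩
  · rw [← hsupp.Psim_comp_eq_lowerMean_comp hVmeas hσ hL (fun x => (hLm x).1) hLsol]
    exact ((hsupp.solvesCm_iff hVmeas hσ hL.measurable).1 hLsol).le
  · rintro ⟨c, hc⟩
    exact hsupp.not_solvesCm_const hVmeas hV hσ c (funext hc ▸ hsol)
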